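/- (Exact first-order form of the entropy–covariance relation, Eq. (8).) Let 𝒜 be a finite nonempty set, let π : 𝒜 → ℝ be a probability distribution with π(a) > 0 for all a, and let A : 𝒜 → ℝ. For ε ∈ ℝ define the exponentially tilted distribution π_ε(a) = π(a)·exp(ε·A(a)) / Σ_{b∈𝒜} π(b)·exp(ε·A(b)). Then the function ε ↦ H(π_ε) is differentiable at ε = 0, and its derivative at 0 equals −Cov_{a∼π}(log π(a), A(a)) = −( Σ_a π(a)·log π(a)·A(a) − (Σ_a π(a)·log π(a))·(Σ_a π(a)·A(a)) ). -/

import Mathlib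

/-- The Shannon entropy of a distribution `p` on a finite action set. -/
noncomputable def entropy {𝒜 : Type*} [Fintype 𝒜] (p : 𝒜 → ℝ) : ℝ :=
  -∑ a : 𝒜, p a * Real.log (p a)

/-!
Writing `Z t = ∑ b, π b * exp (t * A b)`, the logarithm of the tilted weight is
`log (π a) + t * A a - log (Z t)` wherever `π a ≠ 0`, so the entropy of the tilted family is
`log (Z t) - 𝔼_t[log π] - t * 𝔼_t[A]`. The derivative of `log (Z t)` is `𝔼_t[A]`, and that of
`𝔼_t[f]` is `Cov_t(f, A)`. The two terms `𝔼_t[A]` cancel, and what is left is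
`-Cov_t(log π + t * A, A)`, the additive constant `log (Z t)` being invisible to the covariance.
-/

section ExpTilt

open Finset
open Real (exp log exp_pos exp_nonneg exp_ne_zero log_div log_mul log_exp)

variable {𝒜 : Type*} [Fintype 𝒜]

/-- The covariance of `f` and `g` under the weights `p`; it is the usual covariance when `p` is a
probability distribution, but `p` is not required to be one. -/
def weightedCov (p f g : 𝒜 → ℝ) : ℝ :=
  ∑ a, p a * f a * g a - (∑ a, p a * f a) * ∑ a, p a * g a

/-- The partition function `Z t` of the weights `π` tilted along `A`: the normalizing constant of
`expTilt`. -/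
noncomputable def tiltPartition (π A : 𝒜 → ℝ) (t : ℝ) : ℝ :=
  ∑ a, π a * exp (t * A a)

/-- The exponentially tilted distribution `π_t`, i.e. `π * exp (t * A)` normalized to total
mass `1`. By the convention `x / 0 = 0` it is zero when the partition function vanishes. -/
noncomputable def expTilt (π A : 𝒜 → ℝ) (t : ℝ) (a : 𝒜) : ℝ :=
  π a * exp (t * A a) / tiltPartition π A t

variable {π A : 𝒜 → ℝ} {t : ℝ}

-- In the pointwise order `0 < π` means that `π` is nonnegative and not identically zero.
lemma tiltPartition_pos (hπ : 0 < π) : 0 < tiltPartition π A t := by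
  obtain ⟨hπ_nonneg, a, ha⟩ := Pi.lt_def.mp hπ
  exact sum_pos' (fun b _ => mul_nonneg (hπ_nonneg b) (exp_nonneg _))
    ⟨a, mem_univ a, mul_pos ha (exp_pos _)⟩

lemma expTilt_zero (hπ : ∑ a, π a = 1) : expTilt π A 0 = π := by
  ext a
  simp [expTilt, tiltPartition, hπ]

lemma sum_expTilt (hZ : tiltPartition π A t ≠ 0) : ∑ a, expTilt π A t a = 1 := by
  simp only [expTilt, ← sum_div]
  exact div_self hZ

lemma expTilt_mul_log (hZ : tiltPartition π A t ≠ 0) (a : 𝒜) :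
    expTilt π A t a * log (expTilt π A t a) =
      expTilt π A t a * (log (π a) + t * A a - log (tiltPartition π A t)) := by
  by_cases ha : π a = 0
  · simp [expTilt, ha]
  · congr 1
    rw [expTilt, log_div (mul_ne_zero ha (exp_ne_zero _)) hZ, log_mul ha (exp_ne_zero _), log_exp]

lemma sum_expTilt_mul_log (hZ : tiltPartition π A t ≠ 0) :
    ∑ a, expTilt π A t a * log (expTilt π A t a) =
      ∑ a, expTilt π A t a * log (π a) + t * ∑ a, expTilt π A t a * A a -
        log (tiltPartition π A t) := by
  simp only [expTilt_mul_log hZ, mul_sub, mul_add, sum_sub_distrib, sum_add_distrib, ← sum_mul,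
    sum_expTilt hZ, one_mul, mul_sum, mul_left_comm t]

lemma entropy_expTilt (hZ : tiltPartition π A t ≠ 0) :
    entropy (expTilt π A t) =
      log (tiltPartition π A t) - ∑ a, expTilt π A t a * log (π a) -
        t * ∑ a, expTilt π A t a * A a := by
  rw [entropy, sum_expTilt_mul_log hZ]
  ring

lemma weightedCov_log_expTilt (hZ : tiltPartition π A t ≠ 0) :
    weightedCov (expTilt π A t) (fun a => log (expTilt π A t a)) A =
      weightedCov (expTilt π A t) (fun a => log (π a)) A +
        t * weightedCov (expTilt π A t) A A := by
  have hsum : ∑ a, expTilt π A t a * log (expTilt π A t a) * A a =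
      ∑ a, expTilt π A t a * log (π a) * A a + t * ∑ a, expTilt π A t a * A a * A a -
        log (tiltPartition π A t) * ∑ a, expTilt π A t a * A a := by
    simp only [mul_sum, ← sum_add_distrib, ← sum_sub_distrib]
    refine sum_congr rfl fun a _ => ?_
    rw [expTilt_mul_log hZ]
    ring
  simp only [weightedCov, hsum, sum_expTilt_mul_log hZ]
  ring

lemma hasDerivAt_mul_exp_mul (c k t : ℝ) :
    HasDerivAt (fun s => c * exp (s * k)) (c * exp (t * k) * k) t := by
  simpa only [mul_assoc] using (hasDerivAt_mul_const k).exp.const_mul c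

lemma hasDerivAt_tiltPartition (π A : 𝒜 → ℝ) (t : ℝ) :
    HasDerivAt (tiltPartition π A) (∑ a, π a * exp (t * A a) * A a) t :=
  HasDerivAt.fun_sum fun a _ => hasDerivAt_mul_exp_mul (π a) (A a) t

lemma sum_expTilt_mul (π A f : 𝒜 → ℝ) (t : ℝ) :
    ∑ a, expTilt π A t a * f a = (∑ a, π a * exp (t * A a) * f a) / tiltPartition π A t := by
  simp only [expTilt, sum_div, div_mul_eq_mul_div]

lemma hasDerivAt_log_tiltPartition (hZ : tiltPartition π A t ≠ 0) :
    HasDerivAt (fun s => log (tiltPartition π A s)) (∑ a, expTilt π A t a * A a) t := by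
  rw [sum_expTilt_mul]
  exact (hasDerivAt_tiltPartition π A t).log hZ

lemma hasDerivAt_expTilt (hZ : tiltPartition π A t ≠ 0) (a : 𝒜) :
    HasDerivAt (fun s => expTilt π A s a)
      (expTilt π A t a * (A a - ∑ b, expTilt π A t b * A b)) t := by
  refine ((hasDerivAt_mul_exp_mul (π a) (A a) t).fun_div
    (hasDerivAt_tiltPartition π A t) hZ).congr_deriv ?_
  rw [sum_expTilt_mul, expTilt]
  field_simp

lemma hasDerivAt_sum_expTilt_mul (hZ : tiltPartition π A t ≠ 0) (f : 𝒜 → ℝ) :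
    HasDerivAt (fun s => ∑ a, expTilt π A s a * f a) (weightedCov (expTilt π A t) f A) t := by
  refine (HasDerivAt.fun_sum fun a _ =>
    (hasDerivAt_expTilt hZ a).mul_const (f a)).congr_deriv ?_
  rw [weightedCov, sum_mul, ← sum_sub_distrib]
  exact sum_congr rfl fun a _ => by ring

theorem entropy_tilted_hasDerivAt_neg_cov_general (hπ : 0 < π) (A : 𝒜 → ℝ) (t : ℝ) :
    HasDerivAt (fun s => entropy (expTilt π A s))
      (-weightedCov (expTilt π A t) (fun a => log (expTilt π A t a)) A) t := by
  have hZ (s : ℝ) : tiltPartition π A s ≠ 0 := (tiltPartition_pos hπ).ne'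
  simp only [entropy_expTilt (hZ _)]
  have hderiv := ((hasDerivAt_log_tiltPartition (hZ t)).fun_sub
    (hasDerivAt_sum_expTilt_mul (hZ t) fun a => log (π a))).fun_sub
    ((hasDerivAt_id' t).fun_mul (hasDerivAt_sum_expTilt_mul (hZ t) A))
  refine hderiv.congr_deriv ?_
  rw [weightedCov_log_expTilt (hZ t)]
  ring

end ExpTilt

/-- (Exact first-order form of the entropy–covariance relation, Eq. (8).)
For the exponentially tilted family
`π_ε(a) = π(a)·exp(ε·A(a)) / ∑ b, π(b)·exp(ε·A(b))`, the entropy `ε ↦ H(π_ε)`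
is differentiable at `ε = 0`, with derivative `−Cov_{a∼π}(log π(a), A(a))`. -/
theorem entropy_tilted_hasDerivAt_neg_cov {𝒜 : Type*} [Fintype 𝒜] [Nonempty 𝒜]
    (π : 𝒜 → ℝ) (hπ_pos : ∀ a, 0 < π a) (hπ_sum : ∑ a : 𝒜, π a = 1)
    (A : 𝒜 → ℝ) :
    HasDerivAt
      (fun ε : ℝ => entropy
        (fun a => π a * Real.exp (ε * A a) / ∑ b : 𝒜, π b * Real.exp (ε * A b)))
      (-((∑ a : 𝒜, π a * Real.log (π a) * A a) -
          (∑ a : 𝒜, π a * Real.log (π a)) * (∑ a : 𝒜, π a * A a))) 0 := by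
  have hπ : 0 < π := Pi.lt_def.mpr ⟨fun a => (hπ_pos a).le, Classical.arbitrary 𝒜, hπ_pos _⟩
  exact (entropy_tilted_hasDerivAt_neg_cov_general hπ A 0).congr_deriv
    (by rw [expTilt_zero hπ_sum, weightedCov])
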